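/- arXiv:2603.15193 — 2 statements merged into one kernel-verified Lean document; each statement's English description precedes it below -/
import Mathlib

section
/- Let α > 1 and let p : [0,∞) → ℝ satisfy Assumption (H_α) with parameters 0 < c₁ < c₂ and c₃ > 0. Then for every T > 0 there exist s_T > 1 and C_T > 0 such that for every s > s_T and every finitely supported sequence (c_n)_{n∈ℤ} of complex numbers, (1/C_T) ∑_{n∈ℤ} |c_n|² ≤ ∫₀^T |∑_{n∈ℤ} c_n e^{2πi(n·p(t) + |n|^s·t)}|² dt ≤ C_T ∑_{n∈ℤ} |c_n|². -/
open MeasureTheory Set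

/-- Assumption `(H_α)` with parameters `0 < c₁ < c₂` and `c₃ > 0`. -/
def AssumptionH (α c₁ c₂ c₃ : ℝ) (p : ℝ → ℝ) : Prop :=
  ContDiffOn ℝ 1 p (Set.Ici 0) ∧ ContDiffOn ℝ 2 p (Set.Ioi 0) ∧
  (∀ t : ℝ, 0 ≤ t → c₁ * t ^ (α - 1) ≤ |deriv p t| ∧ |deriv p t| ≤ c₂ * t ^ (α - 1)) ∧
  (∀ t : ℝ, 0 < t → c₃ * t ^ (α - 2) ≤ |deriv (deriv p) t|)

/-!
The frequencies are grouped into the blocks `{0, 1, -1}, {2, -2}, {3, -3}, …`. Between different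
blocks the phase speeds `|n| ^ s` are so far apart that, by integration by parts, the inner products
of the waves in `L²` decay like `2 ^ (-s)`, with a square summable weight in each frequency. Hence
for large `s` the Gram matrix is a small perturbation of its block diagonal part, and it remains to
bound the blocks uniformly in `s`.

In the block `{n, -n}` the common phase `|n| ^ s * t` drops out, and the substitution
`u = p t` reduces the estimate to pure exponentials on a fixed interval. In the block `{0, 1, -1}`
the waves do not depend on `s`, and they are linearly independent as soon as `p'` is not identically
`0` and `|p'|` is not identically `1`.
-/

section RieszBounds

variable {ι β 𝕜 H : Type*} [RCLike 𝕜]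

section NormedSpace

variable [NormedAddCommGroup H] [NormedSpace 𝕜 H]

variable (𝕜) in
/-- `δ` is a lower Riesz bound of the vectors `v n`, `n ∈ A`: the `ℓ²` norm of finitely many
coefficients is controlled by the norm of the combination. -/
def HasLowerRieszBound (v : ι → H) (A : Set ι) (δ : ℝ) : Prop :=
  ∀ S : Finset ι, ↑S ⊆ A → ∀ c : ι → 𝕜, δ * ∑ n ∈ S, ‖c n‖ ^ 2 ≤ ‖∑ n ∈ S, c n • v n‖ ^ 2

variable (𝕜) in
/-- `C` is an upper Riesz bound (a Bessel bound) of the vectors `v n`, `n ∈ A`: the norm of a finite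
combination is controlled by the `ℓ²` norm of its coefficients. -/
def HasUpperRieszBound (v : ι → H) (A : Set ι) (C : ℝ) : Prop :=
  ∀ S : Finset ι, ↑S ⊆ A → ∀ c : ι → 𝕜, ‖∑ n ∈ S, c n • v n‖ ^ 2 ≤ C * ∑ n ∈ S, ‖c n‖ ^ 2

lemma HasLowerRieszBound.mono {v : ι → H} {A : Set ι} {δ δ' : ℝ}
    (h : HasLowerRieszBound 𝕜 v A δ) (hδ : δ' ≤ δ) : HasLowerRieszBound 𝕜 v A δ' :=
  fun S hS c => (by gcongr : _ ≤ δ * ∑ n ∈ S, ‖c n‖ ^ 2).trans (h S hS c)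

lemma HasUpperRieszBound.mono {v : ι → H} {A : Set ι} {C C' : ℝ}
    (h : HasUpperRieszBound 𝕜 v A C) (hC : C ≤ C') : HasUpperRieszBound 𝕜 v A C' :=
  fun S hS c => (h S hS c).trans (by gcongr)

lemma HasLowerRieszBound.congr {v v' : ι → H} {A : Set ι} {δ : ℝ}
    (h : HasLowerRieszBound 𝕜 v A δ) (hv : EqOn v v' A) : HasLowerRieszBound 𝕜 v' A δ := by
  intro S hS c
  have hsum : ∑ n ∈ S, c n • v n = ∑ n ∈ S, c n • v' n :=
    Finset.sum_congr rfl fun n hn => by rw [hv (hS hn)]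
  exact hsum ▸ h S hS c

lemma hasLowerRieszBound_coe_finset {v : ι → H} {A : Finset ι} {δ : ℝ}
    (h : ∀ c : ι → 𝕜, δ * ∑ n ∈ A, ‖c n‖ ^ 2 ≤ ‖∑ n ∈ A, c n • v n‖ ^ 2) :
    HasLowerRieszBound 𝕜 v A δ := by
  classical
  intro S hS c
  have hSA : A ∩ S = S := Finset.inter_eq_right.mpr (by exact_mod_cast hS)
  simpa [apply_ite, ite_smul, ite_pow, Finset.sum_ite_mem, hSA]
    using h fun n => if n ∈ S then c n else 0

lemma hasUpperRieszBound_coe_finset (v : ι → H) (A : Finset ι) :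
    HasUpperRieszBound 𝕜 v A (∑ n ∈ A, ‖v n‖ ^ 2) := by
  intro S hS c
  calc ‖∑ n ∈ S, c n • v n‖ ^ 2 ≤ (∑ n ∈ S, ‖v n‖ * ‖c n‖) ^ 2 := by
        gcongr
        exact norm_sum_le_of_le _ fun n _ => by rw [norm_smul, mul_comm]
    _ ≤ (∑ n ∈ S, ‖v n‖ ^ 2) * ∑ n ∈ S, ‖c n‖ ^ 2 := Finset.sum_mul_sq_le_sq_mul_sq _ _ _
    _ ≤ (∑ n ∈ A, ‖v n‖ ^ 2) * ∑ n ∈ S, ‖c n‖ ^ 2 := by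
        gcongr
        exact_mod_cast hS

lemma exists_hasLowerRieszBound_of_linearIndepOn {v : ι → H} {A : Finset ι}
    (hv : LinearIndepOn 𝕜 v (A : Set ι)) : ∃ δ > 0, HasLowerRieszBound 𝕜 v A δ := by
  let f : EuclideanSpace 𝕜 A →ₗ[𝕜] H :=
    Fintype.linearCombination 𝕜 (fun n : A => v n) ∘ₗ (WithLp.linearEquiv 2 𝕜 (A → 𝕜)).toLinearMap
  have hf : Function.Injective f :=
    hv.fintypeLinearCombination_injective.comp (WithLp.linearEquiv 2 𝕜 (A → 𝕜)).injective
  obtain ⟨K, hKpos, hK⟩ := f.exists_antilipschitzWith (LinearMap.ker_eq_bot.mpr hf)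
  refine ⟨((K : ℝ) ^ 2)⁻¹, by positivity, hasLowerRieszBound_coe_finset fun c => ?_⟩
  let x : EuclideanSpace 𝕜 A := WithLp.toLp 2 fun n => c n
  have hx : ‖x‖ ^ 2 = ∑ n ∈ A, ‖c n‖ ^ 2 := by
    rw [EuclideanSpace.norm_sq_eq]
    exact Finset.sum_coe_sort A fun n => ‖c n‖ ^ 2
  have hfx : f x = ∑ n ∈ A, c n • v n := Finset.sum_coe_sort A fun n => c n • v n
  have hle : ‖x‖ ≤ K * ‖f x‖ := by simpa using hK.le_mul_dist x 0
  rw [← hx, ← hfx, inv_mul_le_iff₀ (by positivity), ← mul_pow]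
  gcongr

end NormedSpace

section InnerProductSpace

variable [NormedAddCommGroup H] [InnerProductSpace 𝕜 H] {v : ι → H} {κ : ι → β} {w : ι → ℝ}
  {ε W : ℝ}

lemma norm_sum_sq_sub_sum_norm_sum_fiber_sq [DecidableEq β] (u : ι → H) (κ : ι → β)
    (S : Finset ι) :
    ((‖∑ n ∈ S, u n‖ ^ 2 - ∑ k ∈ S.image κ, ‖∑ n ∈ S with κ n = k, u n‖ ^ 2 : ℝ) : 𝕜) =
      ∑ n ∈ S, ∑ m ∈ S with κ m ≠ κ n, inner 𝕜 (u n) (u m) := by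
  have hmaps : ∀ n ∈ S, κ n ∈ S.image κ := fun n => Finset.mem_image_of_mem κ
  have hfibers : ∑ k ∈ S.image κ, inner 𝕜 (∑ n ∈ S with κ n = k, u n) (∑ n ∈ S with κ n = k, u n) =
      ∑ n ∈ S, ∑ m ∈ S with κ m = κ n, inner 𝕜 (u n) (u m) := by
    rw [← Finset.sum_fiberwise_of_maps_to hmaps]
    refine Finset.sum_congr rfl fun k _ => ?_
    rw [sum_inner]
    exact Finset.sum_congr rfl fun n hn => by rw [inner_sum, (Finset.mem_filter.mp hn).2]
  push_cast
  simp only [← inner_self_eq_norm_sq_to_K]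
  rw [hfibers, sum_inner, sub_eq_iff_eq_add', ← Finset.sum_add_distrib]
  exact Finset.sum_congr rfl fun n _ => by
    rw [inner_sum, Finset.sum_filter_add_sum_filter_not]

/-- The Gram matrix differs from its block diagonal by a matrix dominated by `ε • w ⊗ w`, whose norm
is at most `ε * ∑ w ^ 2`. -/
lemma abs_norm_sum_sq_sub_sum_norm_sum_fiber_sq_le [DecidableEq β]
    (hv : ∀ n m, κ n ≠ κ m → ‖inner 𝕜 (v n) (v m)‖ ≤ ε * (w n * w m))
    (hε : 0 ≤ ε) (hw : ∀ n, 0 ≤ w n) {S : Finset ι} (hW : ∑ n ∈ S, w n ^ 2 ≤ W)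
    (c : ι → 𝕜) :
    |‖∑ n ∈ S, c n • v n‖ ^ 2 - ∑ k ∈ S.image κ, ‖∑ n ∈ S with κ n = k, c n • v n‖ ^ 2| ≤
      ε * W * ∑ n ∈ S, ‖c n‖ ^ 2 := by
  have hentry : ∀ n m, κ m ≠ κ n →
      ‖inner 𝕜 (c n • v n) (c m • v m)‖ ≤ ε * ((w n * ‖c n‖) * (w m * ‖c m‖)) := fun n m hnm => by
    rw [inner_smul_left, inner_smul_right, norm_mul, norm_mul, RCLike.norm_conj]
    calc ‖c n‖ * (‖c m‖ * ‖inner 𝕜 (v n) (v m)‖) ≤ ‖c n‖ * (‖c m‖ * (ε * (w n * w m))) := by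
          gcongr
          exact hv n m hnm.symm
      _ = ε * ((w n * ‖c n‖) * (w m * ‖c m‖)) := by ring
  have hterm : ∀ n, 0 ≤ w n * ‖c n‖ := fun n => mul_nonneg (hw n) (norm_nonneg _)
  rw [← RCLike.norm_ofReal (K := 𝕜), norm_sum_sq_sub_sum_norm_sum_fiber_sq]
  calc ‖∑ n ∈ S, ∑ m ∈ S with κ m ≠ κ n, inner 𝕜 (c n • v n) (c m • v m)‖
      ≤ ∑ n ∈ S, ∑ m ∈ S with κ m ≠ κ n, ε * ((w n * ‖c n‖) * (w m * ‖c m‖)) :=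
        norm_sum_le_of_le _ fun n _ => norm_sum_le_of_le _ fun m hm =>
          hentry n m (Finset.mem_filter.mp hm).2
    _ ≤ ∑ n ∈ S, ∑ m ∈ S, ε * ((w n * ‖c n‖) * (w m * ‖c m‖)) := by
        gcongr with n
        · exact fun m _ _ => mul_nonneg hε (mul_nonneg (hterm n) (hterm m))
        · exact Finset.filter_subset _ _
    _ = ε * (∑ n ∈ S, w n * ‖c n‖) ^ 2 := by
        simp only [← Finset.mul_sum, ← Finset.sum_mul, sq]
    _ ≤ ε * ((∑ n ∈ S, w n ^ 2) * ∑ n ∈ S, ‖c n‖ ^ 2) := by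
        gcongr
        exact Finset.sum_mul_sq_le_sq_mul_sq _ _ _
    _ ≤ ε * (W * ∑ n ∈ S, ‖c n‖ ^ 2) := by gcongr
    _ = ε * W * ∑ n ∈ S, ‖c n‖ ^ 2 := (mul_assoc _ _ _).symm

lemma hasLowerRieszBound_of_fibers {δ : ℝ}
    (hblock : ∀ k, HasLowerRieszBound 𝕜 v (κ ⁻¹' {k}) δ)
    (hv : ∀ n m, κ n ≠ κ m → ‖inner 𝕜 (v n) (v m)‖ ≤ ε * (w n * w m))
    (hε : 0 ≤ ε) (hw : ∀ n, 0 ≤ w n) (hW : ∀ S : Finset ι, ∑ n ∈ S, w n ^ 2 ≤ W) :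
    HasLowerRieszBound 𝕜 v univ (δ - ε * W) := by
  classical
  intro S _ c
  have hoff := abs_le.mp (abs_norm_sum_sq_sub_sum_norm_sum_fiber_sq_le hv hε hw (hW S) c)
  have hdiag : δ * ∑ n ∈ S, ‖c n‖ ^ 2 ≤
      ∑ k ∈ S.image κ, ‖∑ n ∈ S with κ n = k, c n • v n‖ ^ 2 := by
    rw [← Finset.sum_fiberwise_of_maps_to fun n => Finset.mem_image_of_mem κ, Finset.mul_sum]
    exact Finset.sum_le_sum fun k _ => hblock k _ (by simp +contextual [subset_def]) c
  linarith [hoff.1]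

lemma hasUpperRieszBound_of_fibers {C : ℝ}
    (hblock : ∀ k, HasUpperRieszBound 𝕜 v (κ ⁻¹' {k}) C)
    (hv : ∀ n m, κ n ≠ κ m → ‖inner 𝕜 (v n) (v m)‖ ≤ ε * (w n * w m))
    (hε : 0 ≤ ε) (hw : ∀ n, 0 ≤ w n) (hW : ∀ S : Finset ι, ∑ n ∈ S, w n ^ 2 ≤ W) :
    HasUpperRieszBound 𝕜 v univ (C + ε * W) := by
  classical
  intro S _ c
  have hoff := abs_le.mp (abs_norm_sum_sq_sub_sum_norm_sum_fiber_sq_le hv hε hw (hW S) c)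
  have hdiag : ∑ k ∈ S.image κ, ‖∑ n ∈ S with κ n = k, c n • v n‖ ^ 2 ≤
      C * ∑ n ∈ S, ‖c n‖ ^ 2 := by
    rw [← Finset.sum_fiberwise_of_maps_to fun n => Finset.mem_image_of_mem κ, Finset.mul_sum]
    exact Finset.sum_le_sum fun k _ => hblock k _ (by simp +contextual [subset_def]) c
  linarith [hoff.2]

end InnerProductSpace

end RieszBounds

section OscillatoryIntegrals

open Complex ComplexConjugate FourierTransform Filter Topology

lemma hasDerivAt_fourierChar_comp {φ : ℝ → ℝ} {φ' t : ℝ} (h : HasDerivAt φ φ' t) :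
    HasDerivAt (fun t => (𝐞 (φ t) : ℂ)) (2 * Real.pi * I * φ' * 𝐞 (φ t)) t := by
  refine ((Real.hasDerivAt_fourierChar (φ t)).scomp t h).congr_deriv ?_
  rw [real_smul]
  ring

lemma continuous_coe_fourierChar : Continuous fun x : ℝ => (𝐞 x : ℂ) :=
  Real.differentiable_fourierChar.continuous

lemma integral_fourierChar_mul {ω : ℝ} (hω : ω ≠ 0) (u v : ℝ) :
    ∫ x in u..v, (𝐞 (ω * x) : ℂ) = (𝐞 (ω * v) - 𝐞 (ω * u)) / (2 * Real.pi * I * ω) := by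
  have hne : (2 * Real.pi * I * ω : ℂ) ≠ 0 := by
    simp [hω, Real.pi_ne_zero]
  have hderiv : ∀ x ∈ uIcc u v,
      HasDerivAt (fun x => (𝐞 (ω * x) : ℂ) / (2 * Real.pi * I * ω)) (𝐞 (ω * x)) x := fun x _ => by
    have h := (hasDerivAt_fourierChar_comp ((hasDerivAt_id x).const_mul ω)).div_const
      (2 * Real.pi * I * ω)
    simp only [id, mul_one] at h
    exact h.congr_deriv (mul_div_cancel_left₀ _ hne)
  rw [intervalIntegral.integral_eq_sub_of_hasDerivAt hderiv, sub_div]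
  exact (continuous_coe_fourierChar.comp (continuous_const_mul ω)).intervalIntegrable _ _

lemma norm_fourierChar_sub_fourierChar (x y : ℝ) :
    ‖(𝐞 x - 𝐞 y : ℂ)‖ = 2 * |Real.sin (Real.pi * (x - y))| := by
  have hfactor : (𝐞 x - 𝐞 y : ℂ) = 𝐞 y * (exp (I * ↑(2 * Real.pi * (x - y))) - 1) := by
    rw [mul_sub, mul_one, mul_comm I, ← Real.fourierChar_apply, ← Circle.coe_mul,
      ← AddChar.map_add_eq_mul, add_sub_cancel]
  rw [hfactor, norm_mul, Circle.norm_coe, one_mul, norm_exp_I_mul_ofReal_sub_one,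
    Real.norm_eq_abs, abs_mul, abs_two, show 2 * Real.pi * (x - y) / 2 = Real.pi * (x - y) by ring]

lemma norm_integral_fourierChar_mul {ω : ℝ} (hω : ω ≠ 0) (u v : ℝ) :
    ‖∫ x in u..v, (𝐞 (ω * x) : ℂ)‖ = |Real.sin (Real.pi * ω * (v - u))| / (Real.pi * |ω|) := by
  rw [integral_fourierChar_mul hω, norm_div, norm_fourierChar_sub_fourierChar]
  simp only [norm_mul, norm_I, norm_real, norm_ofNat, Real.norm_eq_abs, abs_of_pos Real.pi_pos]
  rw [← mul_sub, ← mul_assoc, mul_one, mul_assoc 2, mul_div_mul_left _ _ two_ne_zero]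

lemma exists_abs_sin_le_mul_abs {θ₀ : ℝ} (hθ₀ : 0 < θ₀) :
    ∃ r < 1, ∀ θ, θ₀ ≤ |θ| → |Real.sin θ| ≤ r * |θ| := by
  have hpi := Real.pi_gt_three
  have hcos : Real.cos (min θ₀ 2 / 2) < 1 :=
    Real.cos_zero ▸ Real.cos_lt_cos_of_nonneg_of_le_pi le_rfl
      (by linarith [min_le_right θ₀ 2]) (half_pos (lt_min hθ₀ two_pos))
  refine ⟨max (1 / 2) (Real.cos (min θ₀ 2 / 2)), max_lt (by norm_num) hcos, fun θ hθ => ?_⟩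
  rcases le_total 2 |θ| with hθ2 | hθ2
  · calc |Real.sin θ| ≤ 1 / 2 * |θ| := (Real.abs_sin_le_one θ).trans (by linarith)
      _ ≤ _ := by gcongr; exact le_max_left _ _
  · have hhalf : |θ / 2| = |θ| / 2 := by rw [abs_div, abs_two]
    have hcos_nonneg : 0 ≤ Real.cos (θ / 2) :=
      Real.cos_nonneg_of_mem_Icc (abs_le.mp (by linarith))
    have hcos_le : Real.cos (θ / 2) ≤ Real.cos (min θ₀ 2 / 2) := by
      rw [← Real.cos_abs (θ / 2), hhalf]
      exact Real.cos_le_cos_of_nonneg_of_le_pi (by positivity) (by linarith)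
        (by linarith [min_le_left θ₀ 2])
    have hdouble : Real.sin θ = 2 * Real.sin (θ / 2) * Real.cos (θ / 2) := by
      rw [← Real.sin_two_mul, mul_div_cancel₀ θ two_ne_zero]
    calc |Real.sin θ| = 2 * |Real.sin (θ / 2)| * Real.cos (θ / 2) := by
          rw [hdouble, abs_mul, abs_mul, abs_two, abs_of_nonneg hcos_nonneg]
      _ ≤ 2 * |θ / 2| * Real.cos (θ / 2) := by gcongr 2 * ?_ * _; exact Real.abs_sin_le_abs
      _ = Real.cos (θ / 2) * |θ| := by rw [hhalf]; ring
      _ ≤ _ := by gcongr; exact hcos_le.trans (le_max_right _ _)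

lemma norm_add_fourierChar_sq (x y : ℂ) (θ : ℝ) :
    ‖x * 𝐞 θ + y * 𝐞 (-θ)‖ ^ 2 =
      ‖x‖ ^ 2 + ‖y‖ ^ 2 + 2 * (x * conj y * 𝐞 (2 * θ)).re := by
  have hcross : x * 𝐞 θ * conj (y * 𝐞 (-θ)) = x * conj y * 𝐞 (2 * θ) := by
    rw [map_mul, ← Circle.coe_inv_eq_conj, AddChar.map_neg_eq_inv, inv_inv, two_mul,
      AddChar.map_add_eq_mul, Circle.coe_mul]
    ring
  rw [← normSq_eq_norm_sq, normSq_add, hcross, normSq_eq_norm_sq, normSq_eq_norm_sq, norm_mul,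
    norm_mul, Circle.norm_coe, Circle.norm_coe, mul_one, mul_one]

lemma integral_norm_add_fourierChar_sq (x y : ℂ) (ω u v : ℝ) :
    ∫ θ in u..v, ‖x * 𝐞 (ω * θ) + y * 𝐞 (-(ω * θ))‖ ^ 2 =
      (v - u) * (‖x‖ ^ 2 + ‖y‖ ^ 2) +
        2 * (x * conj y * ∫ θ in u..v, (𝐞 (2 * ω * θ) : ℂ)).re := by
  have hcont : Continuous fun θ : ℝ => x * conj y * 𝐞 (2 * ω * θ) :=
    continuous_const.mul (continuous_coe_fourierChar.comp (continuous_const_mul (2 * ω)))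
  have hre : ∫ θ in u..v, (x * conj y * 𝐞 (2 * ω * θ)).re =
      (x * conj y * ∫ θ in u..v, (𝐞 (2 * ω * θ) : ℂ)).re := by
    rw [← intervalIntegral.integral_const_mul]
    exact reCLM.intervalIntegral_comp_comm (hcont.intervalIntegrable u v)
  have hint : IntervalIntegrable (fun θ => 2 * (x * conj y * 𝐞 (2 * ω * θ)).re) volume u v :=
    (continuous_const.mul (continuous_re.comp hcont)).intervalIntegrable u v
  have hexpand : ∀ θ, ‖x * 𝐞 (ω * θ) + y * 𝐞 (-(ω * θ))‖ ^ 2 =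
      ‖x‖ ^ 2 + ‖y‖ ^ 2 + 2 * (x * conj y * 𝐞 (2 * ω * θ)).re := fun θ => by
    rw [norm_add_fourierChar_sq, mul_assoc 2 ω]
  simp_rw [hexpand]
  rw [intervalIntegral.integral_add intervalIntegrable_const hint,
    intervalIntegral.integral_const, intervalIntegral.integral_const_mul, hre, smul_eq_mul]

lemma le_abs_integral_norm_add_fourierChar_sq (x y : ℂ) {ω r u v : ℝ} (hω : 0 < ω)
    (hr : |Real.sin (Real.pi * (2 * ω) * (v - u))| ≤ r * |Real.pi * (2 * ω) * (v - u)|) :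
    (1 - r) * |v - u| * (‖x‖ ^ 2 + ‖y‖ ^ 2) ≤
      |∫ θ in u..v, ‖x * 𝐞 (ω * θ) + y * 𝐞 (-(ω * θ))‖ ^ 2| := by
  set J := ∫ θ in u..v, (𝐞 (2 * ω * θ) : ℂ) with hJ_def
  have hJ : ‖J‖ ≤ r * |v - u| := by
    rw [hJ_def, norm_integral_fourierChar_mul (by positivity), div_le_iff₀ (by positivity)]
    refine hr.trans_eq ?_
    rw [abs_mul, abs_mul, abs_of_pos Real.pi_pos]
    ring
  have hcross : |2 * (x * conj y * J).re| ≤ r * |v - u| * (‖x‖ ^ 2 + ‖y‖ ^ 2) := by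
    calc |2 * (x * conj y * J).re| = 2 * |(x * conj y * J).re| := by rw [abs_mul, abs_two]
      _ ≤ 2 * ‖x * conj y * J‖ := by gcongr; exact abs_re_le_norm _
      _ = 2 * ‖x‖ * ‖y‖ * ‖J‖ := by rw [norm_mul, norm_mul, RCLike.norm_conj]; ring
      _ ≤ (‖x‖ ^ 2 + ‖y‖ ^ 2) * (r * |v - u|) := by
          gcongr
          exact two_mul_le_add_sq _ _
      _ = _ := mul_comm _ _
  have hmain : |(v - u) * (‖x‖ ^ 2 + ‖y‖ ^ 2)| = |v - u| * (‖x‖ ^ 2 + ‖y‖ ^ 2) := by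
    rw [abs_mul, abs_of_nonneg (by positivity : 0 ≤ ‖x‖ ^ 2 + ‖y‖ ^ 2)]
  rw [integral_norm_add_fourierChar_sq]
  linarith [abs_sub_abs_le_abs_add ((v - u) * (‖x‖ ^ 2 + ‖y‖ ^ 2)) (2 * (x * conj y * J).re)]

variable {p : ℝ → ℝ} {a b M : ℝ}

lemma intervalIntegrable_deriv_of_bounded (hab : a ≤ b) (hM : ∀ t ∈ Ioo a b, |deriv p t| ≤ M) :
    IntervalIntegrable (deriv p) volume a b := by
  rw [intervalIntegrable_iff_integrableOn_Ioo_of_le hab]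
  exact Integrable.of_bound (measurable_deriv p).aestronglyMeasurable M
    (ae_restrict_of_forall_mem measurableSet_Ioo hM)

lemma abs_integral_le_mul_integral_comp {g : ℝ → ℝ} (hg : Continuous g) (hg₀ : ∀ u, 0 ≤ g u)
    (hab : a ≤ b) (hc : ContinuousOn p (Icc a b)) (hd : DifferentiableOn ℝ p (Ioo a b))
    (hM : ∀ t ∈ Ioo a b, |deriv p t| ≤ M) :
    |∫ u in p a..p b, g u| ≤ M * ∫ t in a..b, g (p t) := by
  have huIcc : uIcc a b = Icc a b := uIcc_of_le hab
  have hgp : ContinuousOn (fun t => g (p t)) (uIcc a b) := huIcc ▸ hg.comp_continuousOn hc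
  have hint : IntervalIntegrable (fun t => g (p t) * deriv p t) volume a b :=
    (intervalIntegrable_deriv_of_bounded hab hM).continuousOn_mul hgp
  have hsubst : ∫ t in a..b, g (p t) * deriv p t = ∫ u in p a..p b, g u := by
    refine intervalIntegral.integral_comp_mul_deriv''' (huIcc ▸ hc) (fun t ht => ?_)
      hg.continuousOn ?_ ((intervalIntegrable_iff').mp hint)
    · rw [min_eq_left hab, max_eq_right hab] at ht
      exact (hd.hasDerivAt (Ioo_mem_nhds ht.1 ht.2)).hasDerivWithinAt
    · exact hg.continuousOn.integrableOn_compact (isCompact_uIcc.image_of_continuousOn (huIcc ▸ hc))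
  calc |∫ u in p a..p b, g u| = |∫ t in a..b, g (p t) * deriv p t| := by rw [hsubst]
    _ ≤ ∫ t in a..b, |g (p t) * deriv p t| := intervalIntegral.abs_integral_le_integral_abs hab
    _ ≤ ∫ t in a..b, M * g (p t) := by
        refine intervalIntegral.integral_mono_on_of_le_Ioo hab hint.abs
          (hgp.intervalIntegrable.const_mul M) fun t ht => ?_
        rw [abs_mul, abs_of_nonneg (hg₀ _), mul_comm]
        gcongr
        exacts [hg₀ _, hM t ht]
    _ = M * ∫ t in a..b, g (p t) := intervalIntegral.integral_const_mul _ _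

lemma smul_integral_fourierChar_add (hab : a ≤ b) (hc : ContinuousOn p (Icc a b))
    (hd : DifferentiableOn ℝ p (Ioo a b)) (hM : ∀ t ∈ Ioo a b, |deriv p t| ≤ M) (x y : ℝ) :
    y • ∫ t in a..b, (𝐞 (x * p t + y * t) : ℂ) =
      (𝐞 (x * p b + y * b) - 𝐞 (x * p a + y * a)) / (2 * Real.pi * I) -
        x • ∫ t in a..b, deriv p t • (𝐞 (x * p t + y * t) : ℂ) := by
  set F : ℝ → ℂ := fun t => 𝐞 (x * p t + y * t)
  have hF : ContinuousOn F (Icc a b) :=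
    continuous_coe_fourierChar.comp_continuousOn (by fun_prop)
  have hF_uIcc : ContinuousOn F (uIcc a b) := uIcc_of_le hab ▸ hF
  have hint : IntervalIntegrable (fun t => y • F t) volume a b :=
    hF_uIcc.intervalIntegrable.smul y
  have hint' : IntervalIntegrable (fun t => x • deriv p t • F t) volume a b :=
    ((intervalIntegrable_deriv_of_bounded hab hM).smul_continuousOn hF_uIcc).smul x
  have hderiv : ∀ t ∈ Ioo a b, HasDerivAt (fun t => F t / (2 * Real.pi * I))
      (x • deriv p t • F t + y • F t) t := fun t ht => by
    have hphase : HasDerivAt (fun t => x * p t + y * t) (x * deriv p t + y * 1) t :=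
      ((hd.hasDerivAt (Ioo_mem_nhds ht.1 ht.2)).const_mul x).add ((hasDerivAt_id t).const_mul y)
    refine ((hasDerivAt_fourierChar_comp hphase).div_const (2 * Real.pi * I)).congr_deriv ?_
    rw [mul_assoc, mul_div_cancel_left₀ _ two_pi_I_ne_zero, real_smul, real_smul, real_smul]
    push_cast
    ring
  rw [eq_sub_iff_add_eq', sub_div, ← intervalIntegral.integral_smul,
    ← intervalIntegral.integral_smul, ← intervalIntegral.integral_add hint' hint]
  exact intervalIntegral.integral_eq_sub_of_hasDerivAt_of_le hab (hF.div_const _) hderiv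
    (hint'.add hint)

lemma abs_mul_norm_integral_fourierChar_add_le (hab : a ≤ b) (hc : ContinuousOn p (Icc a b))
    (hd : DifferentiableOn ℝ p (Ioo a b)) (hM : ∀ t ∈ Ioo a b, |deriv p t| ≤ M) (x y : ℝ) :
    |y| * ‖∫ t in a..b, (𝐞 (x * p t + y * t) : ℂ)‖ ≤ 1 + |x| * (M * (b - a)) := by
  have hboundary : ‖(𝐞 (x * p b + y * b) - 𝐞 (x * p a + y * a) : ℂ) / (2 * Real.pi * I)‖ ≤ 1 := by
    have hnorm : ‖(2 * Real.pi * I : ℂ)‖ = 2 * Real.pi := by simp [Real.pi_pos.le]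
    rw [norm_div, hnorm, div_le_one₀ (by positivity)]
    refine (norm_sub_le _ _).trans ?_
    rw [Circle.norm_coe, Circle.norm_coe]
    linarith [Real.pi_gt_three]
  have hdrift : ‖∫ t in a..b, deriv p t • (𝐞 (x * p t + y * t) : ℂ)‖ ≤ M * (b - a) := by
    rw [intervalIntegral.integral_of_le hab, integral_Ioc_eq_integral_Ioo,
      ← Real.volume_real_Ioo_of_le hab]
    refine norm_setIntegral_le_of_norm_le_const measure_Ioo_lt_top fun t ht => ?_
    rw [norm_smul, Circle.norm_coe, mul_one]
    exact hM t ht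
  rw [← Real.norm_eq_abs, ← norm_smul, smul_integral_fourierChar_add hab hc hd hM]
  refine (norm_sub_le _ _).trans ?_
  rw [norm_smul, Real.norm_eq_abs]
  gcongr

lemma exists_mem_Ioo_ne_left {t₀ : ℝ} (ht₀ : t₀ ∈ Ioo a b) (hp : deriv p t₀ ≠ 0) :
    ∃ t ∈ Ioo a b, p t ≠ p a := by
  by_contra! hconst
  refine hp (EventuallyEq.deriv_eq (f := fun _ => p a) ?_ |>.trans (deriv_const t₀ (p a)))
  filter_upwards [Ioo_mem_nhds ht₀.1 ht₀.2] using hconst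

/-- The pair `𝐞 (± ω * p t)` is compared, through the substitution `u = p t`, with the pure
exponentials `𝐞 (± ω * u)` on an interval of fixed positive length. -/
lemma exists_pos_le_integral_norm_add_fourierChar_sq (hc : ContinuousOn p (Icc a b))
    (hd : DifferentiableOn ℝ p (Ioo a b)) (hM : ∀ t ∈ Ioo a b, |deriv p t| ≤ M)
    (hp : ∃ t ∈ Ioo a b, deriv p t ≠ 0) :
    ∃ δ > 0, ∀ ω, 1 ≤ ω → ∀ x y : ℂ, δ * (‖x‖ ^ 2 + ‖y‖ ^ 2) ≤
      ∫ t in a..b, ‖x * 𝐞 (ω * p t) + y * 𝐞 (-(ω * p t))‖ ^ 2 := by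
  obtain ⟨t₀, ht₀, hpt₀⟩ := hp
  have hMpos : 0 < M := (abs_pos.mpr hpt₀).trans_le (hM t₀ ht₀)
  obtain ⟨b', hb', hpb'⟩ := exists_mem_Ioo_ne_left ht₀ hpt₀
  have hlen : 0 < |p b' - p a| := abs_pos.mpr (sub_ne_zero.mpr hpb')
  obtain ⟨r, hr, hsin⟩ := exists_abs_sin_le_mul_abs (mul_pos Real.two_pi_pos hlen)
  have hIcc : Icc a b' ⊆ Icc a b := Icc_subset_Icc_right hb'.2.le
  have hIoo : Ioo a b' ⊆ Ioo a b := Ioo_subset_Ioo_right hb'.2.le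
  refine ⟨(1 - r) * |p b' - p a| / M, by have := sub_pos.mpr hr; positivity, fun ω hω x y => ?_⟩
  let g : ℝ → ℝ := fun u => ‖x * 𝐞 (ω * u) + y * 𝐞 (-(ω * u))‖ ^ 2
  have hg : Continuous g := by
    have := continuous_coe_fourierChar
    fun_prop
  have hangle : |Real.pi * (2 * ω) * (p b' - p a)| = 2 * Real.pi * |p b' - p a| * ω := by
    rw [abs_mul, abs_of_pos (by positivity)]
    ring
  have hpure : (1 - r) * |p b' - p a| * (‖x‖ ^ 2 + ‖y‖ ^ 2) ≤ |∫ u in p a..p b', g u| :=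
    le_abs_integral_norm_add_fourierChar_sq x y (by positivity)
      (hsin _ (hangle ▸ le_mul_of_one_le_right (by positivity) hω))
  have hsubst : |∫ u in p a..p b', g u| ≤ M * ∫ t in a..b', g (p t) :=
    abs_integral_le_mul_integral_comp hg (fun u => by positivity) hb'.1.le (hc.mono hIcc)
      (hd.mono hIoo) fun t ht => hM t (hIoo ht)
  have hextend : ∫ t in a..b', g (p t) ≤ ∫ t in a..b, g (p t) :=
    intervalIntegral.integral_mono_interval le_rfl hb'.1.le hb'.2.le
      (Eventually.of_forall fun t => by positivity)
      ((hg.comp_continuousOn hc).intervalIntegrable_of_Icc (hb'.1.trans hb'.2).le)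
  rw [div_mul_eq_mul_div, div_le_iff₀' hMpos]
  exact hpure.trans (hsubst.trans (by gcongr))

lemma deriv_eq_zero_of_mapsTo_fourierChar_countable {φ : ℝ → ℝ} {U : Set ℝ} (hU : IsOpen U)
    (hUc : IsPreconnected U) (hφ : DifferentiableOn ℝ φ U) {s : Set ℂ} (hs : s.Countable)
    (hφs : MapsTo (fun t => (𝐞 (φ t) : ℂ)) U s) {t : ℝ} (ht : t ∈ U) : deriv φ t = 0 := by
  have hconst : ((fun t => (𝐞 (φ t) : ℂ)) '' U).Subsingleton :=
    hs.isTotallyDisconnected _ hφs.image_subset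
      (hUc.image _ (continuous_coe_fourierChar.comp_continuousOn hφ.continuousOn))
  have hlocal : (fun t => (𝐞 (φ t) : ℂ)) =ᶠ[𝓝 t] fun _ => 𝐞 (φ t) := by
    filter_upwards [hU.mem_nhds ht] with t' ht'
    exact hconst (mem_image_of_mem _ ht') (mem_image_of_mem _ ht)
  have hzero := (hasDerivAt_fourierChar_comp (hφ.hasDerivAt (hU.mem_nhds ht))).unique
    ((hasDerivAt_const t (𝐞 (φ t) : ℂ)).congr_of_eventuallyEq hlocal)
  simpa [Real.pi_ne_zero] using hzero

lemma finite_setOf_norm_eq_and_re_eq (r c : ℝ) : {w : ℂ | ‖w‖ = r ∧ w.re = c}.Finite := by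
  let ρ := √(r ^ 2 - c ^ 2)
  refine (toFinite {(⟨c, ρ⟩ : ℂ), ⟨c, -ρ⟩}).subset fun w ⟨hnorm, hre⟩ => ?_
  have him : w.im ^ 2 = ρ ^ 2 := by
    rw [Real.sq_sqrt] <;> rw [← hnorm, ← hre, sq_norm_sub_sq_re]
    exact sq_nonneg _
  exact (sq_eq_sq_iff_eq_or_eq_neg.mp him).imp (Complex.ext hre) (Complex.ext hre)

/-- Otherwise `‖x * 𝐞 φ + y * 𝐞 (-φ)‖` would oscillate with `φ`. -/
lemma eq_zero_or_eq_zero_of_norm_add_fourierChar_eq {φ : ℝ → ℝ} {U : Set ℝ} (hU : IsOpen U)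
    (hUc : IsPreconnected U) (hφ : DifferentiableOn ℝ φ U) (hφ' : ∃ t ∈ U, deriv φ t ≠ 0)
    {x y : ℂ} {r : ℝ} (hr : ∀ t ∈ U, ‖x * 𝐞 (φ t) + y * 𝐞 (-φ t)‖ = r) : x = 0 ∨ y = 0 := by
  obtain ⟨t₀, ht₀, hne⟩ := hφ'
  by_contra! hxy
  have hζ : x * conj y ≠ 0 := mul_ne_zero hxy.1 (by simpa using hxy.2)
  have hfinite := (finite_setOf_norm_eq_and_re_eq ‖x * conj y‖
    ((r ^ 2 - ‖x‖ ^ 2 - ‖y‖ ^ 2) / 2)).preimage (mul_right_injective₀ hζ).injOn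
  have hderiv : deriv (fun t => 2 * φ t) t₀ = 0 := by
    refine deriv_eq_zero_of_mapsTo_fourierChar_countable hU hUc (hφ.const_mul 2)
      hfinite.countable (fun t ht => ⟨by simp only [norm_mul, Circle.norm_coe, mul_one], ?_⟩) ht₀
    have hsq := norm_add_fourierChar_sq x y (φ t)
    rw [hr t ht] at hsq
    linarith
  rw [deriv_const_mul_field] at hderiv
  exact hne (by simpa using hderiv)

lemma eq_zero_of_mul_fourierChar_eq_const {φ : ℝ → ℝ} {U : Set ℝ} (hU : IsOpen U)
    (hUc : IsPreconnected U) (hφ : DifferentiableOn ℝ φ U) (hφ' : ∃ t ∈ U, deriv φ t ≠ 0)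
    {x z : ℂ} (hz : ∀ t ∈ U, x * 𝐞 (φ t) = z) : x = 0 := by
  obtain ⟨t₀, ht₀, hne⟩ := hφ'
  by_contra hx
  refine hne (deriv_eq_zero_of_mapsTo_fourierChar_countable hU hUc hφ
    (countable_singleton (z / x)) (fun t ht => ?_) ht₀)
  rw [mem_singleton_iff, eq_div_iff hx, mul_comm]
  exact hz t ht

lemma eq_zero_of_fourierChar_add_add_fourierChar_sub_eq_const {U : Set ℝ} (hU : IsOpen U)
    (hUc : IsPreconnected U) (hp : DifferentiableOn ℝ p U) (hp₀ : ∃ t ∈ U, deriv p t ≠ 0)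
    (hp₁ : ∃ t ∈ U, |deriv p t| ≠ 1) {x y z : ℂ}
    (hz : ∀ t ∈ U, x * 𝐞 (t + p t) + y * 𝐞 (t - p t) = z) : x = 0 ∧ y = 0 := by
  obtain ⟨t₁, ht₁, hne⟩ := hp₁
  have hpt₁ := hp.hasDerivAt (hU.mem_nhds ht₁)
  have hnorm : ∀ t ∈ U, ‖x * 𝐞 (p t) + y * 𝐞 (-p t)‖ = ‖z‖ := fun t ht => by
    have hsplit : x * 𝐞 (t + p t) + y * 𝐞 (t - p t) = 𝐞 t * (x * 𝐞 (p t) + y * 𝐞 (-p t)) := by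
      rw [sub_eq_add_neg, AddChar.map_add_eq_mul, AddChar.map_add_eq_mul, Circle.coe_mul,
        Circle.coe_mul]
      ring
    rw [← hz t ht, hsplit, norm_mul, Circle.norm_coe, one_mul]
  rcases eq_zero_or_eq_zero_of_norm_add_fourierChar_eq hU hUc hp hp₀ hnorm with rfl | rfl
  · refine ⟨rfl, eq_zero_of_mul_fourierChar_eq_const hU hUc (differentiableOn_id.sub hp)
      ⟨t₁, ht₁, fun hzero => hne ?_⟩ fun t ht => by simpa using hz t ht⟩
    have h1 : deriv p t₁ = 1 := by
      linarith [((hasDerivAt_id t₁).sub hpt₁).deriv.symm.trans hzero]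
    rw [h1, abs_one]
  · refine ⟨eq_zero_of_mul_fourierChar_eq_const hU hUc (differentiableOn_id.add hp)
      ⟨t₁, ht₁, fun hzero => hne ?_⟩ fun t ht => by simpa using hz t ht, rfl⟩
    have h1 : deriv p t₁ = -1 := by
      linarith [((hasDerivAt_id t₁).add hpt₁).deriv.symm.trans hzero]
    rw [h1, abs_neg, abs_one]

end OscillatoryIntegrals

section LpClasses

variable {ι X 𝕜 E : Type*} [MeasurableSpace X] {μ : Measure X} [RCLike 𝕜] [NormedAddCommGroup E]

lemma coeFn_sum_smul_toLp [NormedSpace 𝕜 E] {q : ENNReal} {f : ι → X → E}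
    (hf : ∀ n, MemLp (f n) q μ) (S : Finset ι) (c : ι → 𝕜) :
    ⇑(∑ n ∈ S, c n • (hf n).toLp (f n)) =ᵐ[μ] fun x => ∑ n ∈ S, c n • f n x := by
  classical
  induction S using Finset.induction_on with
  | empty =>
    simp only [Finset.sum_empty]
    exact Lp.coeFn_zero E q μ
  | insert m S hm ih =>
    rw [Finset.sum_insert hm]
    filter_upwards [ih, Lp.coeFn_add (c m • (hf m).toLp (f m)) (∑ n ∈ S, c n • (hf n).toLp (f n)),
      Lp.coeFn_smul (c m) ((hf m).toLp (f m)), (hf m).coeFn_toLp] with x hS hadd hsmul hcoe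
    rw [hadd, Pi.add_apply, hS, hsmul, Pi.smul_apply, hcoe, Finset.sum_insert hm]

lemma eqOn_sum_smul_of_sum_smul_toLp_eq_zero [NormedSpace 𝕜 E] {q : ENNReal} {a b : ℝ}
    {f : ι → ℝ → E} (hf : ∀ n, MemLp (f n) q (volume.restrict (Ioc a b)))
    (hfc : ∀ n, ContinuousOn (f n) (Ioc a b)) {S : Finset ι} {c : ι → 𝕜}
    (hsum : ∑ n ∈ S, c n • (hf n).toLp (f n) = 0) :
    EqOn (fun t => ∑ n ∈ S, c n • f n t) 0 (Ioc a b) := by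
  have hae : (fun t => ∑ n ∈ S, c n • f n t) =ᵐ[volume.restrict (Ioc a b)] 0 :=
    (coeFn_sum_smul_toLp hf S c).symm.trans (hsum ▸ Lp.coeFn_zero E q _)
  exact Measure.eqOn_Ioc_of_ae_eq volume hae
    (continuousOn_finsetSum _ fun n _ => (hfc n).const_smul (c n)) continuousOn_const

variable [InnerProductSpace 𝕜 E]

lemma inner_toLp_toLp {f g : X → E} (hf : MemLp f 2 μ) (hg : MemLp g 2 μ) :
    inner 𝕜 (hf.toLp f) (hg.toLp g) = ∫ x, inner 𝕜 (f x) (g x) ∂μ := by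
  rw [L2.inner_def]
  refine integral_congr_ae ?_
  filter_upwards [hf.coeFn_toLp, hg.coeFn_toLp] with x hfx hgx
  rw [hfx, hgx]

lemma norm_sum_smul_toLp_sq {f : ι → X → E} (hf : ∀ n, MemLp (f n) 2 μ) (S : Finset ι)
    (c : ι → 𝕜) :
    ‖∑ n ∈ S, c n • (hf n).toLp (f n)‖ ^ 2 = ∫ x, ‖∑ n ∈ S, c n • f n x‖ ^ 2 ∂μ := by
  rw [← inner_self_eq_norm_sq (𝕜 := 𝕜), L2.inner_def, ← integral_re (L2.integrable_inner _ _)]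
  refine integral_congr_ae ?_
  filter_upwards [coeFn_sum_smul_toLp hf S c] with x hx
  rw [hx, inner_self_eq_norm_sq]

end LpClasses

section FrequencyBlocks

/-- The index of the block of `n` in the partition of the frequencies into
`{0, 1, -1}, {2, -2}, {3, -3}, …`. The truncated subtraction puts `0` and `±1` in block `0`. -/
def freqBlock (n : ℤ) : ℕ := n.natAbs - 1

lemma freqBlock_preimage_zero : freqBlock ⁻¹' {0} = (({0, 1, -1} : Finset ℤ) : Set ℤ) := by
  ext n
  simp only [freqBlock, mem_preimage, mem_singleton_iff, Finset.mem_coe, Finset.mem_insert,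
    Finset.mem_singleton]
  lia

lemma freqBlock_preimage_succ (k : ℕ) :
    freqBlock ⁻¹' {k + 1} = (({(k : ℤ) + 2, -((k : ℤ) + 2)} : Finset ℤ) : Set ℤ) := by
  ext n
  simp only [freqBlock, mem_preimage, mem_singleton_iff, Finset.mem_coe, Finset.mem_insert,
    Finset.mem_singleton]
  lia

lemma abs_le_freqBlock_add_one (n : ℤ) : |(n : ℝ)| ≤ freqBlock n + 1 := by
  have h : n.natAbs ≤ freqBlock n + 1 := by
    rw [freqBlock]
    lia
  rw [← Int.cast_abs, ← Nat.cast_natAbs]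
  exact_mod_cast h

lemma freqBlock_add_one_eq_abs {n : ℤ} (hn : n ≠ 0) : (freqBlock n + 1 : ℝ) = |(n : ℝ)| := by
  have h : freqBlock n + 1 = n.natAbs := by
    rw [freqBlock]
    lia
  rw [← Int.cast_abs, ← Nat.cast_natAbs]
  exact_mod_cast h

lemma summable_freqBlock_add_one_sq_inv : Summable fun n : ℤ => ((freqBlock n + 1 : ℝ) ^ 2)⁻¹ := by
  refine (summable_congr_cofinite ?_).mp (Real.summable_one_div_int_pow.mpr one_lt_two)
  filter_upwards [(finite_singleton (0 : ℤ)).compl_mem_cofinite] with n hn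
  rw [freqBlock_add_one_eq_abs hn, sq_abs, one_div]

lemma rpow_sub_one_le_rpow_sub_rpow {k l s : ℝ} (hl : 0 ≤ l) (hlk : l + 1 ≤ k) (hs : 1 ≤ s) :
    k ^ (s - 1) ≤ k ^ s - l ^ s := by
  have hk : 0 ≤ k := by linarith
  have hsplit : ∀ x : ℝ, 0 ≤ x → x ^ s = x * x ^ (s - 1) := fun x hx => by
    rw [← Real.rpow_one_add' hx (by linarith), add_sub_cancel]
  have hmono : l ^ (s - 1) ≤ k ^ (s - 1) := by
    gcongr
    linarith
  calc k ^ (s - 1) ≤ (k - l) * k ^ (s - 1) :=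
        le_mul_of_one_le_left (Real.rpow_nonneg hk _) (by linarith)
    _ ≤ k * k ^ (s - 1) - l * l ^ (s - 1) := by
        rw [sub_mul]
        gcongr
    _ = k ^ s - l ^ s := by rw [hsplit k hk, hsplit l hl]

lemma le_mul_two_rpow_of_rpow_mul_le {k K s x : ℝ} (hk : 2 ≤ k) (hK : 0 ≤ K) (hs : 4 ≤ s)
    (h : k ^ (s - 1) * x ≤ k * K) : x ≤ K * 2 ^ (4 - s) * (k ^ 2)⁻¹ := by
  have hk₀ : 0 < k := by linarith
  have hpow : k ^ (s - 1) * k ^ (4 - s) = k ^ 3 := by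
    rw [← Real.rpow_add hk₀, ← Real.rpow_natCast k 3]
    norm_num
  have hcancel : k ^ (s - 1) * x ≤ k ^ (s - 1) * (K * k ^ (4 - s) * (k ^ 2)⁻¹) := by
    refine h.trans_eq ?_
    calc k * K = k ^ 3 * K * (k ^ 2)⁻¹ := by field_simp
      _ = _ := by rw [← hpow]; ring
  calc x ≤ K * k ^ (4 - s) * (k ^ 2)⁻¹ :=
        le_of_mul_le_mul_left hcancel (Real.rpow_pos_of_pos hk₀ _)
    _ ≤ K * 2 ^ (4 - s) * (k ^ 2)⁻¹ := by
        gcongr K * ?_ * _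
        exact Real.rpow_le_rpow_of_nonpos two_pos hk (sub_nonpos.mpr hs)

end FrequencyBlocks

section DispersiveWaves

open Complex ComplexConjugate FourierTransform Filter Topology

variable {p : ℝ → ℝ} {a b M s : ℝ}

/-- The mode of frequency `n` of the equation with dispersion relation `|n| ^ s`, observed along the
curve `p`. -/
noncomputable def dispersiveWave (p : ℝ → ℝ) (s : ℝ) (n : ℤ) (t : ℝ) : ℂ :=
  𝐞 (n * p t + |(n : ℝ)| ^ s * t)

lemma norm_dispersiveWave (n : ℤ) (t : ℝ) : ‖dispersiveWave p s n t‖ = 1 := Circle.norm_coe _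

lemma continuousOn_dispersiveWave {U : Set ℝ} (hc : ContinuousOn p U) (n : ℤ) :
    ContinuousOn (dispersiveWave p s n) U :=
  continuous_coe_fourierChar.comp_continuousOn (by fun_prop)

lemma inner_dispersiveWave (n m : ℤ) (t : ℝ) :
    inner ℂ (dispersiveWave p s n t) (dispersiveWave p s m t) =
      𝐞 ((m - n : ℝ) * p t + (|(m : ℝ)| ^ s - |(n : ℝ)| ^ s) * t) := by
  rw [RCLike.inner_apply', dispersiveWave, dispersiveWave, ← Circle.coe_inv_eq_conj,
    ← AddChar.map_neg_eq_inv, ← Circle.coe_mul, ← AddChar.map_add_eq_mul]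
  congr 2
  ring

lemma memLp_dispersiveWave (hc : ContinuousOn p (Icc a b)) (n : ℤ) :
    MemLp (dispersiveWave p s n) 2 (volume.restrict (Ioc a b)) :=
  .of_bound (((continuousOn_dispersiveWave hc n).mono Ioc_subset_Icc_self).aestronglyMeasurable
    measurableSet_Ioc) 1 (.of_forall fun t => (norm_dispersiveWave n t).le)

/-- `dispersiveWave p s n` as an element of `L²(a, b)`. -/
noncomputable def dispersiveWaveLp (hc : ContinuousOn p (Icc a b)) (s : ℝ) (n : ℤ) :
    Lp ℂ 2 (volume.restrict (Ioc a b)) :=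
  (memLp_dispersiveWave (s := s) hc n).toLp

lemma inner_dispersiveWaveLp (hab : a ≤ b) (hc : ContinuousOn p (Icc a b)) (n m : ℤ) :
    inner ℂ (dispersiveWaveLp hc s n) (dispersiveWaveLp hc s m) =
      ∫ t in a..b, (𝐞 ((m - n : ℝ) * p t + (|(m : ℝ)| ^ s - |(n : ℝ)| ^ s) * t) : ℂ) := by
  rw [dispersiveWaveLp, dispersiveWaveLp, inner_toLp_toLp, intervalIntegral.integral_of_le hab]
  simp only [inner_dispersiveWave]

lemma norm_sum_smul_dispersiveWaveLp_sq (hab : a ≤ b) (hc : ContinuousOn p (Icc a b))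
    (S : Finset ℤ) (c : ℤ → ℂ) :
    ‖∑ n ∈ S, c n • dispersiveWaveLp hc s n‖ ^ 2 =
      ∫ t in a..b, ‖∑ n ∈ S, c n * dispersiveWave p s n t‖ ^ 2 := by
  rw [intervalIntegral.integral_of_le hab]
  exact norm_sum_smul_toLp_sq (memLp_dispersiveWave hc) S c

lemma norm_dispersiveWaveLp_sq (hab : a ≤ b) (hc : ContinuousOn p (Icc a b)) (n : ℤ) :
    ‖dispersiveWaveLp hc s n‖ ^ 2 = b - a := by
  simpa [norm_dispersiveWave] using norm_sum_smul_dispersiveWaveLp_sq (s := s) hab hc {n} fun _ => 1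

lemma mul_sub_nonneg_of_abs_deriv_le (hab : a < b) (hM : ∀ t ∈ Ioo a b, |deriv p t| ≤ M) :
    0 ≤ M * (b - a) := by
  obtain ⟨t, ht⟩ := nonempty_Ioo.mpr hab
  exact mul_nonneg ((abs_nonneg _).trans (hM t ht)) (sub_nonneg.mpr hab.le)

/-- High dispersion separates the blocks: the phase difference `|n| ^ s - |m| ^ s` is at least
`|n| ^ (s - 1)`, while the transport term contributes at most a multiple of `|n|`. -/
lemma rpow_mul_norm_inner_dispersiveWaveLp_le (hab : a < b) (hc : ContinuousOn p (Icc a b))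
    (hd : DifferentiableOn ℝ p (Ioo a b)) (hM : ∀ t ∈ Ioo a b, |deriv p t| ≤ M) (hs : 1 ≤ s)
    {n m : ℤ} (hmn : freqBlock m < freqBlock n) :
    (freqBlock n + 1 : ℝ) ^ (s - 1) *
        ‖inner ℂ (dispersiveWaveLp hc s m) (dispersiveWaveLp hc s n)‖ ≤
      (freqBlock n + 1) * (1 + 2 * (M * (b - a))) := by
  set k : ℝ := freqBlock n + 1
  set J := inner ℂ (dispersiveWaveLp hc s m) (dispersiveWaveLp hc s n) with hJ
  have hMba := mul_sub_nonneg_of_abs_deriv_le hab hM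
  have hnk : |(n : ℝ)| = k := (freqBlock_add_one_eq_abs fun h => by simp [h, freqBlock] at hmn).symm
  have hblock : (freqBlock m + 1 : ℝ) ≤ freqBlock n := by exact_mod_cast hmn
  have hmk : |(m : ℝ)| + 1 ≤ k := by linarith [abs_le_freqBlock_add_one m]
  calc k ^ (s - 1) * ‖J‖ ≤ |(|(n : ℝ)| ^ s - |(m : ℝ)| ^ s)| * ‖J‖ := by
        gcongr
        rw [hnk]
        exact (rpow_sub_one_le_rpow_sub_rpow (abs_nonneg _) hmk hs).trans (le_abs_self _)
    _ ≤ 1 + |(n - m : ℝ)| * (M * (b - a)) := by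
        rw [hJ, inner_dispersiveWaveLp hab.le]
        exact abs_mul_norm_integral_fourierChar_add_le hab.le hc hd hM _ _
    _ ≤ k + 2 * k * (M * (b - a)) := by
        gcongr
        · linarith [abs_nonneg (m : ℝ)]
        · linarith [abs_sub (n : ℝ) m]
    _ = k * (1 + 2 * (M * (b - a))) := by ring

lemma norm_inner_dispersiveWaveLp_le (hab : a < b) (hc : ContinuousOn p (Icc a b))
    (hd : DifferentiableOn ℝ p (Ioo a b)) (hM : ∀ t ∈ Ioo a b, |deriv p t| ≤ M) (hs : 4 ≤ s)
    {n m : ℤ} (hnm : freqBlock n ≠ freqBlock m) :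
    ‖inner ℂ (dispersiveWaveLp hc s n) (dispersiveWaveLp hc s m)‖ ≤
      (1 + 2 * (M * (b - a))) * 2 ^ (4 - s) *
        ((freqBlock n + 1 : ℝ)⁻¹ * (freqBlock m + 1 : ℝ)⁻¹) := by
  wlog hlt : freqBlock n < freqBlock m generalizing n m
  · rw [← inner_conj_symm, RCLike.norm_conj, mul_comm (freqBlock n + 1 : ℝ)⁻¹]
    exact this hnm.symm (hnm.lt_or_gt.resolve_left hlt)
  have hMba := mul_sub_nonneg_of_abs_deriv_le hab hM
  have hblock : (freqBlock n + 1 : ℝ) ≤ freqBlock m := by exact_mod_cast hlt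
  refine (le_mul_two_rpow_of_rpow_mul_le (by linarith [(freqBlock n).cast_nonneg (α := ℝ)])
    (by positivity) hs
    (rpow_mul_norm_inner_dispersiveWaveLp_le hab hc hd hM (by linarith) hlt)).trans ?_
  rw [sq, mul_inv]
  gcongr

lemma norm_add_dispersiveWave_neg (x y : ℂ) (n : ℤ) (t : ℝ) :
    ‖x * dispersiveWave p s n t + y * dispersiveWave p s (-n) t‖ =
      ‖x * 𝐞 (n * p t) + y * 𝐞 (-(n * p t))‖ := by
  have hphase : x * dispersiveWave p s n t + y * dispersiveWave p s (-n) t =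
      𝐞 (|(n : ℝ)| ^ s * t) * (x * 𝐞 (n * p t) + y * 𝐞 (-(n * p t))) := by
    simp only [dispersiveWave, Int.cast_neg, abs_neg, neg_mul, AddChar.map_add_eq_mul,
      Circle.coe_mul]
    ring
  rw [hphase, norm_mul, Circle.norm_coe, one_mul]

lemma exists_hasLowerRieszBound_dispersiveWaveLp_pair (hab : a ≤ b) (hc : ContinuousOn p (Icc a b))
    (hd : DifferentiableOn ℝ p (Ioo a b)) (hM : ∀ t ∈ Ioo a b, |deriv p t| ≤ M)
    (hp₀ : ∃ t ∈ Ioo a b, deriv p t ≠ 0) :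
    ∃ δ > 0, ∀ (s : ℝ) (n : ℤ), 1 ≤ n →
      HasLowerRieszBound ℂ (dispersiveWaveLp hc s) (({n, -n} : Finset ℤ) : Set ℤ) δ := by
  obtain ⟨δ, hδ, hbound⟩ := exists_pos_le_integral_norm_add_fourierChar_sq hc hd hM hp₀
  refine ⟨δ, hδ, fun s n hn => hasLowerRieszBound_coe_finset fun c => ?_⟩
  have hne : n ≠ -n := by lia
  rw [norm_sum_smul_dispersiveWaveLp_sq hab]
  simp only [Finset.sum_pair hne, norm_add_dispersiveWave_neg]
  exact hbound n (by exact_mod_cast hn) (c n) (c (-n))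

lemma linearIndepOn_dispersiveWaveLp_one (hc : ContinuousOn p (Icc a b))
    (hd : DifferentiableOn ℝ p (Ioo a b)) (hp₀ : ∃ t ∈ Ioo a b, deriv p t ≠ 0)
    (hp₁ : ∃ t ∈ Ioo a b, |deriv p t| ≠ 1) :
    LinearIndepOn ℂ (dispersiveWaveLp hc 1) (({0, 1, -1} : Finset ℤ) : Set ℤ) := by
  rw [linearIndepOn_finset_iff]
  intro c hsum
  have hzero := eqOn_sum_smul_of_sum_smul_toLp_eq_zero (memLp_dispersiveWave hc)
    (continuousOn_dispersiveWave (hc.mono Ioc_subset_Icc_self)) hsum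
  have hpoint : ∀ t ∈ Ioo a b, c 1 * 𝐞 (t + p t) + c (-1) * 𝐞 (t - p t) = -c 0 := fun t ht => by
    have hcomb : c 0 + (c 1 * 𝐞 (p t + t) + c (-1) * 𝐞 (-p t + t)) = 0 := by
      simpa [dispersiveWave] using hzero (Ioo_subset_Ioc_self ht)
    rw [add_comm t, sub_eq_neg_add]
    exact eq_neg_of_add_eq_zero_right hcomb
  obtain ⟨h1, hneg⟩ := eq_zero_of_fourierChar_add_add_fourierChar_sub_eq_const isOpen_Ioo
    isPreconnected_Ioo hd hp₀ hp₁ hpoint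
  obtain ⟨t, ht, -⟩ := hp₀
  have h0 : c 0 = 0 := by simpa [h1, hneg] using (hpoint t ht).symm
  simp [h0, h1, hneg]

lemma eqOn_dispersiveWaveLp_one (hc : ContinuousOn p (Icc a b)) (hs : s ≠ 0) :
    EqOn (dispersiveWaveLp hc 1) (dispersiveWaveLp hc s) (({0, 1, -1} : Finset ℤ) : Set ℤ) := by
  intro n hn
  have hpow : |(n : ℝ)| ^ (1 : ℝ) = |(n : ℝ)| ^ s := by
    rcases (by simpa using hn : n = 0 ∨ n = 1 ∨ n = -1) with rfl | rfl | rfl <;> simp [hs]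
  have hwave : dispersiveWave p 1 n = dispersiveWave p s n := funext fun t => by
    rw [dispersiveWave, dispersiveWave, hpow]
  simp only [dispersiveWaveLp, hwave]

lemma exists_hasLowerRieszBound_dispersiveWaveLp_freqBlock (hab : a ≤ b)
    (hc : ContinuousOn p (Icc a b)) (hd : DifferentiableOn ℝ p (Ioo a b))
    (hM : ∀ t ∈ Ioo a b, |deriv p t| ≤ M) (hp₀ : ∃ t ∈ Ioo a b, deriv p t ≠ 0)
    (hp₁ : ∃ t ∈ Ioo a b, |deriv p t| ≠ 1) :
    ∃ δ > 0, ∀ s : ℝ, s ≠ 0 → ∀ k,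
      HasLowerRieszBound ℂ (dispersiveWaveLp hc s) (freqBlock ⁻¹' {k}) δ := by
  obtain ⟨δ₀, hδ₀, htriple⟩ := exists_hasLowerRieszBound_of_linearIndepOn
    (linearIndepOn_dispersiveWaveLp_one hc hd hp₀ hp₁)
  obtain ⟨δ₁, hδ₁, hpair⟩ := exists_hasLowerRieszBound_dispersiveWaveLp_pair hab hc hd hM hp₀
  refine ⟨min δ₀ δ₁, lt_min hδ₀ hδ₁, fun s hs k => ?_⟩
  cases k with
  | zero =>
    rw [freqBlock_preimage_zero]
    exact (htriple.congr (eqOn_dispersiveWaveLp_one hc hs)).mono (min_le_left _ _)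
  | succ k =>
    rw [freqBlock_preimage_succ]
    exact (hpair s _ (by lia)).mono (min_le_right _ _)

lemma hasUpperRieszBound_dispersiveWaveLp_freqBlock (hab : a ≤ b) (hc : ContinuousOn p (Icc a b))
    (k : ℕ) :
    HasUpperRieszBound ℂ (dispersiveWaveLp hc s) (freqBlock ⁻¹' {k}) (3 * (b - a)) := by
  have hcard (A : Finset ℤ) (hA : A.card ≤ 3) :
      HasUpperRieszBound ℂ (dispersiveWaveLp hc s) (A : Set ℤ) (3 * (b - a)) := by
    refine (hasUpperRieszBound_coe_finset _ A).mono ?_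
    simp only [norm_dispersiveWaveLp_sq hab, Finset.sum_const, nsmul_eq_mul]
    gcongr
    exact_mod_cast hA
  cases k with
  | zero =>
    rw [freqBlock_preimage_zero]
    exact hcard _ Finset.card_le_three
  | succ k =>
    rw [freqBlock_preimage_succ]
    exact hcard _ (Finset.card_le_two.trans (by simp))

/-- Since the off-diagonal blocks of the Gram matrix decay like `2 ^ (-s)`, for large `s` they are
negligible with respect to the diagonal ones. -/
lemma exists_eventually_rieszBounds_dispersiveWaveLp (hab : a < b) (hc : ContinuousOn p (Icc a b))
    (hd : DifferentiableOn ℝ p (Ioo a b)) (hM : ∀ t ∈ Ioo a b, |deriv p t| ≤ M)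
    (hp₀ : ∃ t ∈ Ioo a b, deriv p t ≠ 0) (hp₁ : ∃ t ∈ Ioo a b, |deriv p t| ≠ 1) :
    ∃ δ > 0, ∃ C, ∀ᶠ s in atTop, HasLowerRieszBound ℂ (dispersiveWaveLp hc s) univ δ ∧
      HasUpperRieszBound ℂ (dispersiveWaveLp hc s) univ C := by
  obtain ⟨δ, hδ, hblock⟩ :=
    exists_hasLowerRieszBound_dispersiveWaveLp_freqBlock hab.le hc hd hM hp₀ hp₁
  set w : ℤ → ℝ := fun n => (freqBlock n + 1 : ℝ)⁻¹ with hw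
  set W : ℝ := ∑' n : ℤ, ((freqBlock n + 1 : ℝ) ^ 2)⁻¹
  set ε : ℝ → ℝ := fun s => (1 + 2 * (M * (b - a))) * 2 ^ (4 - s)
  have hw_nonneg (n : ℤ) : 0 ≤ w n := by positivity
  have hW (S : Finset ℤ) : ∑ n ∈ S, w n ^ 2 ≤ W := by
    simp only [hw, inv_pow]
    exact summable_freqBlock_add_one_sq_inv.sum_le_tsum S fun n _ => by positivity
  have hε_nonneg (s : ℝ) : 0 ≤ ε s := by
    have := mul_sub_nonneg_of_abs_deriv_le hab hM
    positivity
  have hpow : Tendsto (fun s : ℝ => (2 : ℝ) ^ (4 - s)) atTop (𝓝 0) :=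
    (tendsto_rpow_atBot_of_base_gt_one 2 one_lt_two).comp
      (tendsto_const_nhds.add_atBot tendsto_neg_atTop_atBot)
  have hεW : Tendsto (fun s => ε s * W) atTop (𝓝 0) := by
    simpa using (hpow.const_mul (1 + 2 * (M * (b - a)))).mul_const W
  refine ⟨δ / 2, half_pos hδ, 3 * (b - a) + δ / 2, ?_⟩
  filter_upwards [eventually_ge_atTop 4, hεW.eventually_le_const (half_pos hδ)] with s hs hsmall
  have hoff (n m : ℤ) := norm_inner_dispersiveWaveLp_le (n := n) (m := m) hab hc hd hM hs
  exact ⟨(hasLowerRieszBound_of_fibers (hblock s (by linarith)) hoff (hε_nonneg s) hw_nonneg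
      hW).mono (by linarith),
    (hasUpperRieszBound_of_fibers (hasUpperRieszBound_dispersiveWaveLp_freqBlock hab.le hc) hoff
      (hε_nonneg s) hw_nonneg hW).mono (by linarith)⟩

lemma dispersiveWave_eq_exp (n : ℤ) (t : ℝ) :
    dispersiveWave p s n t =
      exp (2 * Real.pi * I * ((n : ℂ) * (p t : ℂ) + ((|(n : ℝ)| ^ s : ℝ) : ℂ) * (t : ℂ))) := by
  rw [dispersiveWave, Real.fourierChar_apply]
  push_cast
  ring_nf

lemma integral_norm_tsum_mul_exp_sq (hab : a ≤ b) (hc : ContinuousOn p (Icc a b)) {S : Finset ℤ}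
    {c : ℤ → ℂ} (hS : ∀ n ∉ S, c n = 0) :
    ∫ t in a..b, ‖∑' n : ℤ, c n * exp (2 * Real.pi * I *
        ((n : ℂ) * (p t : ℂ) + ((|(n : ℝ)| ^ s : ℝ) : ℂ) * (t : ℂ)))‖ ^ 2 =
      ‖∑ n ∈ S, c n • dispersiveWaveLp hc s n‖ ^ 2 := by
  simp only [norm_sum_smul_dispersiveWaveLp_sq hab, ← dispersiveWave_eq_exp]
  congr! 4 with t
  exact tsum_eq_sum fun n hn => by rw [hS n hn, zero_mul]

end DispersiveWaves

theorem high_dispersion_observability_general {a b M : ℝ} (hab : a < b) {p : ℝ → ℝ}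
    (hc : ContinuousOn p (Icc a b)) (hd : DifferentiableOn ℝ p (Ioo a b))
    (hM : ∀ t ∈ Ioo a b, |deriv p t| ≤ M) (hp₀ : ∃ t ∈ Ioo a b, deriv p t ≠ 0)
    (hp₁ : ∃ t ∈ Ioo a b, |deriv p t| ≠ 1) :
    ∃ sT : ℝ, 1 < sT ∧ ∃ CT : ℝ, 0 < CT ∧
      ∀ s : ℝ, sT < s →
        ∀ c : ℤ → ℂ, {n : ℤ | c n ≠ 0}.Finite →
          (1 / CT) * (∑' n : ℤ, ‖c n‖ ^ 2) ≤
            (∫ t in a..b,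
              ‖∑' n : ℤ, c n * Complex.exp (2 * Real.pi * Complex.I *
                ((n : ℂ) * (p t : ℂ) + ((|(n : ℝ)| ^ s : ℝ) : ℂ) * (t : ℂ)))‖ ^ 2) ∧
          (∫ t in a..b,
              ‖∑' n : ℤ, c n * Complex.exp (2 * Real.pi * Complex.I *
                ((n : ℂ) * (p t : ℂ) + ((|(n : ℝ)| ^ s : ℝ) : ℂ) * (t : ℂ)))‖ ^ 2) ≤
            CT * (∑' n : ℤ, ‖c n‖ ^ 2) := by
  obtain ⟨δ, hδ, C, hbounds⟩ :=
    exists_eventually_rieszBounds_dispersiveWaveLp hab hc hd hM hp₀ hp₁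
  obtain ⟨s₀, hs₀⟩ := Filter.eventually_atTop.mp hbounds
  refine ⟨max s₀ 2, by simp, max δ⁻¹ C, by simp [hδ], fun s hs c hfin => ?_⟩
  obtain ⟨hlower, hupper⟩ := hs₀ s ((le_max_left _ _).trans hs.le)
  have hsupp : ∀ n ∉ hfin.toFinset, c n = 0 := by simp
  have hδ' : 1 / max δ⁻¹ C ≤ δ := by
    rw [one_div]
    exact inv_le_of_inv_le₀ hδ (le_max_left _ _)
  rw [integral_norm_tsum_mul_exp_sq hab.le hc hsupp,
    tsum_eq_sum (s := hfin.toFinset) fun n hn => by simp [hsupp n hn]]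
  exact ⟨hlower.mono hδ' _ (subset_univ _) c,
    hupper.mono (le_max_right _ _) _ (subset_univ _) c⟩

namespace AssumptionH

variable {α c₁ c₂ c₃ : ℝ} {p : ℝ → ℝ}

lemma continuousOn_Icc (hp : AssumptionH α c₁ c₂ c₃ p) (T : ℝ) : ContinuousOn p (Icc 0 T) :=
  hp.1.continuousOn.mono Icc_subset_Ici_self

lemma differentiableOn_Ioo (hp : AssumptionH α c₁ c₂ c₃ p) (T : ℝ) :
    DifferentiableOn ℝ p (Ioo 0 T) :=
  (hp.2.1.differentiableOn (by simp)).mono Ioo_subset_Ioi_self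

lemma abs_deriv_le_of_mem_Ioo (hp : AssumptionH α c₁ c₂ c₃ p) (hα : 1 ≤ α) (hc₂ : 0 ≤ c₂) {T t : ℝ}
    (ht : t ∈ Ioo 0 T) : |deriv p t| ≤ c₂ * T ^ (α - 1) :=
  (hp.2.2.1 t ht.1.le).2.trans <|
    mul_le_mul_of_nonneg_left (Real.rpow_le_rpow ht.1.le ht.2.le (by linarith)) hc₂

lemma deriv_ne_zero (hp : AssumptionH α c₁ c₂ c₃ p) (hc₁ : 0 < c₁) {t : ℝ} (ht : 0 < t) :
    deriv p t ≠ 0 :=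
  abs_pos.mp <| (mul_pos hc₁ (Real.rpow_pos_of_pos ht _)).trans_le (hp.2.2.1 t ht.le).1

lemma exists_mem_Ioo_abs_deriv_lt_one (hp : AssumptionH α c₁ c₂ c₃ p) (hα : 1 < α) {T : ℝ}
    (hT : 0 < T) : ∃ t ∈ Ioo 0 T, |deriv p t| < 1 := by
  have hcont : ContinuousAt (fun t : ℝ => c₂ * t ^ (α - 1)) 0 :=
    (Real.continuousAt_rpow_const _ _ (.inr (by linarith))).const_mul c₂
  have hsmall : ∀ᶠ t in nhds (0 : ℝ), c₂ * t ^ (α - 1) < 1 :=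
    hcont.eventually_lt_const (by simp [Real.zero_rpow (sub_ne_zero.mpr hα.ne')])
  obtain ⟨t, ht, htT⟩ := ((hsmall.filter_mono nhdsWithin_le_nhds).and (Ioo_mem_nhdsGT hT)).exists
  exact ⟨t, htT, (hp.2.2.1 t htT.1.le).2.trans_lt ht⟩

end AssumptionH

/-- **Theorem `th:merge`: observability for highly dispersive equations.**
For every `T > 0` there are `s_T > 1` and `C_T > 0` such that for all `s > s_T` a
two-sided `ℓ²` estimate holds, with no minimal time and no frequency cutoff. -/
theorem high_dispersion_observability
    (α c₁ c₂ c₃ : ℝ) (hα : 1 < α)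
    (hc₁ : 0 < c₁) (hc₁₂ : c₁ < c₂) (hc₃ : 0 < c₃)
    (p : ℝ → ℝ) (hp : AssumptionH α c₁ c₂ c₃ p) :
    ∀ T : ℝ, 0 < T → ∃ sT : ℝ, 1 < sT ∧ ∃ CT : ℝ, 0 < CT ∧
      ∀ s : ℝ, sT < s →
        ∀ c : ℤ → ℂ, {n : ℤ | c n ≠ 0}.Finite →
          (1 / CT) * (∑' n : ℤ, ‖c n‖ ^ 2) ≤
            (∫ t in (0:ℝ)..T,
              ‖∑' n : ℤ, c n * Complex.exp (2 * Real.pi * Complex.I *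
                ((n : ℂ) * (p t : ℂ) + ((|(n : ℝ)| ^ s : ℝ) : ℂ) * (t : ℂ)))‖ ^ 2) ∧
          (∫ t in (0:ℝ)..T,
              ‖∑' n : ℤ, c n * Complex.exp (2 * Real.pi * Complex.I *
                ((n : ℂ) * (p t : ℂ) + ((|(n : ℝ)| ^ s : ℝ) : ℂ) * (t : ℂ)))‖ ^ 2) ≤
            CT * (∑' n : ℤ, ‖c n‖ ^ 2) := by
  intro T hT
  obtain ⟨t, htT, ht⟩ := hp.exists_mem_Ioo_abs_deriv_lt_one hα hT
  exact high_dispersion_observability_general hT (hp.continuousOn_Icc T) (hp.differentiableOn_Ioo T)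
    (fun _ => hp.abs_deriv_le_of_mem_Ioo hα.le (hc₁.trans hc₁₂).le)
    ⟨t, htT, hp.deriv_ne_zero hc₁ htT.1⟩ ⟨t, htT, ht.ne⟩
end

section
/- Let s > 0, N ≥ 0, let (λ_n)_{n=−N}^{N} be pairwise distinct real numbers and (c_n)_{n=−N}^{N} complex numbers, and define F(t,x) = ∑_{n=−N}^{N} c_n e^{2πi(|n|^s t + λ_n x)} for complex t, x. Let T > 0 and let γ : ℂ → ℂ be an entire function which is not a polynomial of degree ≤ 1 (i.e. γ is not affine). If the set {t ∈ (0,T) : F(t, γ(t)) = 0} has an accumulation point in (0,T), then c_n = 0 for all n, i.e. F ≡ 0. -/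
open Set Filter

/-!
An entire function whose real part is bounded above by `C * (1 + ‖z‖)` is affine: the
Borel–Carathéodory inequality bounds its norm linearly, and Liouville's theorem applies to its
derivative. Hence `Re (2πi γ(z)) / (1 + ‖z‖)` is unbounded above, and along a filter on which it
tends to infinity the terms `2πi λₙ γ(z)` dominate the linear phases `2πi aₙ z`: the exponential
with the largest `λₙ` outgrows all the others. By the identity theorem the sum vanishes on all of
`ℂ`, in particular along this filter, so its coefficients vanish one after the other, in decreasing
order of `λₙ`.
-/

section LinearGrowth

lemma norm_deriv_le_of_norm_le_linear {E : Type*} [NormedAddCommGroup E] [NormedSpace ℂ E]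
    {f : ℂ → E} (hf : Differentiable ℂ f) {C : ℝ} (hC : ∀ z, ‖f z‖ ≤ C * (1 + ‖z‖)) (z : ℂ) :
    ‖deriv f z‖ ≤ 2 * C := by
  have hC_nonneg : 0 ≤ C := by simpa using (norm_nonneg _).trans (hC 0)
  have hsphere : ∀ w ∈ Metric.sphere z (1 + ‖z‖), ‖f w‖ ≤ 2 * C * (1 + ‖z‖) := by
    intro w hw
    have hw_norm : ‖w‖ ≤ ‖z‖ + (1 + ‖z‖) := by
      simpa only [mem_sphere_iff_norm.mp hw] using norm_le_norm_add_norm_sub' w z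
    calc ‖f w‖ ≤ C * (1 + ‖w‖) := hC w
      _ ≤ C * (1 + (‖z‖ + (1 + ‖z‖))) := by gcongr
      _ = 2 * C * (1 + ‖z‖) := by ring
  have hR : 0 < 1 + ‖z‖ := by positivity
  calc ‖deriv f z‖ ≤ 2 * C * (1 + ‖z‖) / (1 + ‖z‖) :=
        Complex.norm_deriv_le_of_forall_mem_sphere_norm_le hR hf.diffContOnCl hsphere
    _ = 2 * C := mul_div_cancel_right₀ _ hR.ne'

lemma exists_eq_smul_add_of_norm_le_linear {E : Type*} [NormedAddCommGroup E] [NormedSpace ℂ E]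
    [CompleteSpace E] {f : ℂ → E} (hf : Differentiable ℂ f) {C : ℝ}
    (hC : ∀ z, ‖f z‖ ≤ C * (1 + ‖z‖)) : ∃ u v : E, ∀ z, f z = z • u + v := by
  have hderiv_bounded : Bornology.IsBounded (range (deriv f)) :=
    isBounded_iff_forall_norm_le.mpr
      ⟨2 * C, forall_mem_range.mpr (norm_deriv_le_of_norm_le_linear hf hC)⟩
  obtain ⟨u, hu⟩ := hf.deriv.exists_const_forall_eq_of_bounded hderiv_bounded
  have hderiv_zero : ∀ z, HasDerivAt (fun w => f w - w • u) 0 z := fun z => by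
    simpa [hu] using (hf z).hasDerivAt.fun_sub ((hasDerivAt_id z).smul_const u)
  refine ⟨u, f 0, fun z => ?_⟩
  have hconst := is_const_of_deriv_eq_zero (fun z => (hderiv_zero z).differentiableAt)
    (fun z => (hderiv_zero z).deriv) z 0
  rw [zero_smul, sub_zero, sub_eq_iff_eq_add'] at hconst
  exact hconst

variable {f : ℂ → ℂ} {C : ℝ}

lemma norm_le_linear_of_re_le_linear (hf : Differentiable ℂ f) (hC : 0 < C)
    (hre : ∀ z, (f z).re ≤ C * (1 + ‖z‖)) (z : ℂ) :
    ‖f z‖ ≤ (4 * C + 3 * ‖f 0‖) * (1 + ‖z‖) := by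
  have hre_ball : MapsTo f (Metric.ball 0 (1 + 2 * ‖z‖)) {w | w.re ≤ C * (2 + 2 * ‖z‖)} := by
    intro w hw
    have hw_norm : ‖w‖ < 1 + 2 * ‖z‖ := mem_ball_zero_iff.mp hw
    calc (f w).re ≤ C * (1 + ‖w‖) := hre w
      _ ≤ C * (1 + (1 + 2 * ‖z‖)) := by gcongr
      _ = C * (2 + 2 * ‖z‖) := by ring
  have hz_mem : z ∈ Metric.ball (0 : ℂ) (1 + 2 * ‖z‖) := by
    rw [mem_ball_zero_iff]
    linarith [norm_nonneg z]
  have hgap : 1 + 2 * ‖z‖ - ‖z‖ = 1 + ‖z‖ := by ring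
  calc ‖f z‖ ≤ 2 * (C * (2 + 2 * ‖z‖)) * ‖z‖ / (1 + ‖z‖)
          + ‖f 0‖ * (1 + 2 * ‖z‖ + ‖z‖) / (1 + ‖z‖) := by
        simpa only [hgap] using Complex.borelCaratheodory (by positivity) hf.differentiableOn
          hre_ball (by positivity) hz_mem
    _ = 4 * C * ‖z‖ + ‖f 0‖ * ((1 + 3 * ‖z‖) / (1 + ‖z‖)) := by
        field_simp
        ring
    _ ≤ 4 * C * (1 + ‖z‖) + ‖f 0‖ * (3 * (1 + ‖z‖)) := by
        gcongr
        · linarith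
        · rw [div_le_iff₀ (by positivity)]
          nlinarith [norm_nonneg z]
    _ = (4 * C + 3 * ‖f 0‖) * (1 + ‖z‖) := by ring

lemma exists_eq_mul_add_of_re_le_linear (hf : Differentiable ℂ f)
    (hre : ∀ z, (f z).re ≤ C * (1 + ‖z‖)) : ∃ u v : ℂ, ∀ z, f z = u * z + v := by
  have hre' : ∀ z, (f z).re ≤ (|C| + 1) * (1 + ‖z‖) := fun z =>
    (hre z).trans (by gcongr; linarith [le_abs_self C])
  obtain ⟨u, v, huv⟩ := exists_eq_smul_add_of_norm_le_linear hf
    (norm_le_linear_of_re_le_linear hf (by positivity) hre')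
  exact ⟨u, v, fun z => by rw [huv, smul_eq_mul, mul_comm]⟩

lemma neBot_comap_re_div_one_add_norm_atTop (hf : Differentiable ℂ f)
    (hf_not_affine : ¬∃ u v : ℂ, ∀ z, f z = u * z + v) :
    (comap (fun z => (f z).re / (1 + ‖z‖)) atTop).NeBot := by
  rw [comap_neBot_iff_frequently, frequently_atTop]
  by_contra! hbdd
  obtain ⟨C, hC⟩ := hbdd
  refine hf_not_affine (exists_eq_mul_add_of_re_le_linear (C := C) hf fun z => ?_)
  have hlt : (f z).re / (1 + ‖z‖) < C := lt_of_not_ge fun hge => hC _ hge (mem_range_self z)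
  exact ((div_lt_iff₀ (by positivity)).mp hlt).le

lemma tendsto_re_linear_add_mul_atBot {l : Filter ℂ}
    (hf : Tendsto (fun z => (f z).re / (1 + ‖z‖)) l atTop) (b : ℂ) {δ : ℝ} (hδ : δ < 0) :
    Tendsto (fun z => (b * z + δ * f z).re) l atBot := by
  have hlim : Tendsto (fun z => ‖b‖ + δ * ((f z).re / (1 + ‖z‖))) l atBot :=
    tendsto_atBot_add_const_left l _ (hf.const_mul_atTop_of_neg hδ)
  refine tendsto_atBot_mono' l ?_ hlim
  filter_upwards [hlim.eventually_le_atBot 0] with z hz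
  calc (b * z + δ * f z).re = (b * z).re + δ * (f z).re := by
        rw [Complex.add_re, Complex.re_ofReal_mul]
    _ ≤ ‖b‖ * (1 + ‖z‖) + δ * (f z).re := by
        have hbz : (b * z).re ≤ ‖b‖ * ‖z‖ := (Complex.re_le_norm _).trans_eq (norm_mul b z)
        linarith [norm_nonneg b]
    _ = (‖b‖ + δ * ((f z).re / (1 + ‖z‖))) * (1 + ‖z‖) := by field_simp
    _ ≤ ‖b‖ + δ * ((f z).re / (1 + ‖z‖)) :=
        mul_le_of_one_le_right hz (by linarith [norm_nonneg z])

end LinearGrowth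

section ExponentialSums

variable {α ι : Type*} {l : Filter α} [l.NeBot] {S : Finset ι} {c : ι → ℂ} {g : ι → α → ℂ}

lemma leading_coeff_eq_zero_of_sum_exp_eq_zero {c₀ : ℂ} {g₀ : α → ℂ}
    (hdom : ∀ n ∈ S, Tendsto (fun x => (g n x - g₀ x).re) l atBot)
    (hsum : ∀ᶠ x in l, c₀ * Complex.exp (g₀ x) + ∑ n ∈ S, c n * Complex.exp (g n x) = 0) :
    c₀ = 0 := by
  have hlim : Tendsto (fun x => c₀ + ∑ n ∈ S, c n * Complex.exp (g n x - g₀ x)) l (nhds c₀) := by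
    simpa using tendsto_const_nhds.add (tendsto_finsetSum S fun n hn =>
      (Complex.tendsto_exp_nhds_zero_iff.mpr (hdom n hn)).const_mul (c n))
  refine tendsto_nhds_unique_of_eventuallyEq hlim tendsto_const_nhds ?_
  filter_upwards [hsum] with x hx
  calc c₀ + ∑ n ∈ S, c n * Complex.exp (g n x - g₀ x)
      = (c₀ * Complex.exp (g₀ x) + ∑ n ∈ S, c n * Complex.exp (g n x)) / Complex.exp (g₀ x) := by
        simp only [Complex.exp_sub, add_div, Finset.sum_div, mul_div_assoc,
          div_self (Complex.exp_ne_zero _), mul_one]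
    _ = 0 := by rw [hx, zero_div]

lemma coeff_eq_zero_of_sum_exp_eq_zero {R : Type*} [LinearOrder R] {rate : ι → R}
    (hinj : InjOn rate S)
    (hdom : ∀ m ∈ S, ∀ n ∈ S, rate n < rate m → Tendsto (fun x => (g n x - g m x).re) l atBot)
    (hsum : ∀ᶠ x in l, ∑ n ∈ S, c n * Complex.exp (g n x) = 0) : ∀ n ∈ S, c n = 0 := by
  classical
  induction S using Finset.induction_on_max_value rate with
  | empty => simp
  | insert m S hm hmax ih =>
    simp only [Finset.sum_insert hm] at hsum
    rw [Finset.coe_insert, injOn_insert (Finset.mem_coe.not.mpr hm)] at hinj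
    rw [Finset.forall_mem_insert] at hdom ⊢
    have hlt : ∀ n ∈ S, rate n < rate m := fun n hn =>
      (hmax n hn).lt_of_ne fun heq => hinj.2 ⟨n, hn, heq⟩
    have hcm : c m = 0 := leading_coeff_eq_zero_of_sum_exp_eq_zero
      (fun n hn => hdom.1 n (Finset.mem_insert_of_mem hn) (hlt n hn)) hsum
    refine ⟨hcm, ih hinj.1 (fun k hk n hn => hdom.2 k hk n (Finset.mem_insert_of_mem hn)) ?_⟩
    simpa only [hcm, zero_mul, zero_add] using hsum

end ExponentialSums

lemma coeff_eq_zero_of_sum_exp_linear_add_mul_eq_zero {ι : Type*} {S : Finset ι} {a c : ι → ℂ}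
    {lam : ι → ℝ} (hlam : InjOn lam S) {f : ℂ → ℂ} (hf : Differentiable ℂ f)
    (hf_not_affine : ¬∃ u v : ℂ, ∀ z, f z = u * z + v)
    (hsum : ∀ z, ∑ n ∈ S, c n * Complex.exp (a n * z + lam n * f z) = 0) :
    ∀ n ∈ S, c n = 0 := by
  have := neBot_comap_re_div_one_add_norm_atTop hf hf_not_affine
  refine coeff_eq_zero_of_sum_exp_eq_zero (l := comap (fun z => (f z).re / (1 + ‖z‖)) atTop) hlam
    (fun m _ n _ hlt => ?_) (.of_forall hsum)
  refine (tendsto_re_linear_add_mul_atBot tendsto_comap (a n - a m) (sub_neg.mpr hlt)).congr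
    fun z => ?_
  push_cast
  ring_nf

lemma eq_zero_of_accPt_zeros {E : Type*} [NormedAddCommGroup E] [NormedSpace ℂ E]
    [CompleteSpace E] {f : ℂ → E} (hf : Differentiable ℂ f) {z₀ : ℂ}
    (hz₀ : AccPt z₀ (𝓟 {z | f z = 0})) : f = 0 :=
  AnalyticOnNhd.eq_of_frequently_eq (fun z _ => hf.analyticAt z) (fun _ _ => analyticAt_const)
    (accPt_iff_frequently_nhdsNE.mp hz₀)

theorem merhol_entire_general {ι : Type*} (S : Finset ι) (a c : ι → ℂ) (lam : ι → ℝ)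
    (hlam : InjOn lam S) (γ : ℂ → ℂ) (hγ : Differentiable ℂ γ)
    (hnotaffine : ¬∃ u v : ℂ, ∀ z : ℂ, γ z = u * z + v)
    (hacc : ∃ t₀ : ℂ, AccPt t₀ (𝓟 {t : ℂ | ∑ n ∈ S, c n *
      Complex.exp (2 * Real.pi * Complex.I * (a n * t + lam n * γ t)) = 0})) :
    ∀ n ∈ S, c n = 0 := by
  obtain ⟨t₀, ht₀⟩ := hacc
  have hvanish := eq_zero_of_accPt_zeros (by fun_prop) ht₀
  have hmul_not_affine : ¬∃ u v : ℂ, ∀ z, 2 * Real.pi * Complex.I * γ z = u * z + v := by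
    rintro ⟨u, v, huv⟩
    refine hnotaffine ⟨u / (2 * Real.pi * Complex.I), v / (2 * Real.pi * Complex.I), fun z => ?_⟩
    rw [div_mul_eq_mul_div, ← add_div, ← huv, mul_div_cancel_left₀ _ Complex.two_pi_I_ne_zero]
  refine coeff_eq_zero_of_sum_exp_linear_add_mul_eq_zero
    (a := fun n => 2 * Real.pi * Complex.I * a n) hlam (hγ.const_mul _) hmul_not_affine fun z => ?_
  simpa only [mul_add, mul_assoc, mul_left_comm, Pi.zero_apply] using congrFun hvanish z

/-- **Theorem `thm:merhol`, entire case.** Let `γ` be an entire function which is not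
affine. If the zero set `{t ∈ (0,T) : F(t,γ(t)) = 0}` of the low-frequency sum
`F(t,x) = ∑_{n=−N}^N c_n e^{2πi(|n|^s t + λ_n x)}` has an accumulation point in
`(0,T)`, then all coefficients vanish. -/
theorem merhol_entire
    (s : ℝ) (hs : 0 < s) (N : ℕ)
    (lam : ℤ → ℝ)
    (hlam : ∀ m ∈ Finset.Icc (-(N : ℤ)) N, ∀ n ∈ Finset.Icc (-(N : ℤ)) N,
      m ≠ n → lam m ≠ lam n)
    (c : ℤ → ℂ) (T : ℝ) (hT : 0 < T)
    (γ : ℂ → ℂ) (hγ : Differentiable ℂ γ)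
    (hnotaffine : ¬∃ u v : ℂ, ∀ z : ℂ, γ z = u * z + v)
    (hacc : ∃ t₀ ∈ Set.Ioo (0:ℝ) T, AccPt t₀ (𝓟 {t : ℝ | t ∈ Set.Ioo (0:ℝ) T ∧
      ∑ n ∈ Finset.Icc (-(N : ℤ)) N, c n * Complex.exp (2 * Real.pi * Complex.I *
        (((|(n : ℝ)| ^ s : ℝ) : ℂ) * (t : ℂ) + (lam n : ℂ) * γ (t : ℂ))) = 0})) :
    ∀ n ∈ Finset.Icc (-(N : ℤ)) N, c n = 0 := by
  obtain ⟨t₀, -, ht₀⟩ := hacc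
  refine merhol_entire_general _ (fun n : ℤ => ((|(n : ℝ)| ^ s : ℝ) : ℂ)) c lam
    (fun m hm n hn => not_imp_not.mp (hlam m hm n hn)) γ hγ hnotaffine ⟨t₀, ?_⟩
  exact (ht₀.map Complex.continuous_ofReal.continuousAt Complex.ofReal_injective).mono
    (tendsto_principal_principal.mpr fun t ht => ht.2)
end
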